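/- Let (X_n)_{n∈ℕ} be i.i.d. real random variables with X_n ≥ 1 almost surely and 𝔼[X_n] = +∞, and define random 3×3 matrices over ℝ_max by A(n) = [[-X_n, -X_n, 0],[-∞, 0, 0],[-∞, -∞, -1]]. Then for every n ≥ 1, x(n,0) = (max(-X_{n-1}, -(n-1)), 0, -n)ᵀ, and (1/n)·x(n,0) converges to (0,0,-1)ᵀ in probability but does not converge almost surely. -/

import Mathlib

open Filter MeasureTheory ProbabilityTheory Topology

noncomputable section

/-- Max-plus action of a `d × d` matrix over `ℝ_max = ℝ ∪ {-∞}` (encoded as `EReal`,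
with `⊤` never used) on a vector: `(A ⊗ v) i = max_j (A i j + v j)`. -/
def mpVec {d : ℕ} (A : Fin d → Fin d → EReal) (v : Fin d → EReal) : Fin d → EReal :=
  fun i => ⨆ j, A i j + v j

/-- `appProd n f v = f 0 ⊗ f 1 ⊗ ⋯ ⊗ f (n-1) ⊗ v` in the max-plus algebra. -/
def appProd {d : ℕ} : ℕ → (ℕ → Fin d → Fin d → EReal) → (Fin d → EReal) → Fin d → EReal
  | 0, _, v => v
  | n + 1, f, v => mpVec (f 0) (appProd n (fun k => f (k + 1)) v)

/-- `xvec f n = f (n-1) ⊗ ⋯ ⊗ f 0 ⊗ 0`; with `f m = A(m)` this is `x(n, 0)`. -/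
def xvec {d : ℕ} (f : ℕ → Fin d → Fin d → EReal) : ℕ → Fin d → EReal
  | 0 => fun _ => 0
  | n + 1 => mpVec (f n) (xvec f n)

/-- `lvec n f = f 0 ⊗ f 1 ⊗ ⋯ ⊗ f (n-1) ⊗ 0`; with `f k = A(-(k+1))` this is `y(n, 0)`. -/
def lvec {d : ℕ} (n : ℕ) (f : ℕ → Fin d → Fin d → EReal) : Fin d → EReal :=
  appProd n f (fun _ => 0)

/-- Multiplication of an extended real by `1/n`. -/
def mpScale (n : ℕ) (x : EReal) : EReal := (((n : ℝ)⁻¹ : ℝ) : EReal) * x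

/-- The matrix of the integrability example: `A(n) = [[-Xₙ, -Xₙ, 0], [-∞, 0, 0], [-∞, -∞, -1]]`. -/
def exIntegMat (x : ℝ) : Fin 3 → Fin 3 → EReal :=
  ![![((-x : ℝ) : EReal), ((-x : ℝ) : EReal), 0], ![⊥, 0, 0], ![⊥, ⊥, -1]]

/-- The max-plus recursion of the integrability example in closed form. -/
lemma xvec_exIntegMat_succ {x : ℕ → ℝ} (hx : ∀ n, 0 ≤ x n) (n : ℕ) :
    xvec (fun m => exIntegMat (x m)) (n + 1) 0 = ((max (-x n) (-(n : ℝ)) : ℝ) : EReal) ∧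
      xvec (fun m => exIntegMat (x m)) (n + 1) 1 = 0 ∧
      xvec (fun m => exIntegMat (x m)) (n + 1) 2 = ((-((n : ℝ) + 1) : ℝ) : EReal) := by
  induction n with
  | zero => simp [xvec, mpVec, iSup_fin_three, exIntegMat, hx 0]
  | succ n ih =>
    obtain ⟨h0, h1, h2⟩ := ih
    have hle : max (-x n) (-(n : ℝ)) ≤ 0 := max_le (by linarith [hx n]) (by simp)
    rw [xvec]
    simp only [mpVec, iSup_fin_three, h0, h1, h2]
    simp only [exIntegMat, Matrix.cons_val]
    refine ⟨?_, ?_, ?_⟩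
    · have hmax := fun a b : ℝ => EReal.coe_strictMono.monotone.map_max (a := a) (b := b)
      rw [zero_add, add_zero, ← EReal.coe_add, ← hmax, ← hmax,
        max_eq_right (by linarith : -x (n + 1) + max (-x n) (-(n : ℝ)) ≤ -x (n + 1)),
        Nat.cast_add_one]
    · rw [EReal.bot_add, add_zero, zero_add, max_eq_right bot_le, max_eq_left]
      exact_mod_cast (by linarith [n.cast_nonneg (α := ℝ)] : -((n : ℝ) + 1) ≤ 0)
    · have hneg : (-1 : EReal) = ((-1 : ℝ) : EReal) := by simp
      rw [EReal.bot_add, EReal.bot_add, sup_idem, max_eq_right bot_le, hneg, ← EReal.coe_add,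
        Nat.cast_add_one, EReal.coe_eq_coe_iff]
      ring

lemma mpScale_coe (n : ℕ) (r : ℝ) : mpScale n (r : EReal) = (((n : ℝ)⁻¹ * r : ℝ) : EReal) :=
  (EReal.coe_mul _ _).symm

lemma ofReal_le_tsum_indicator (x : ℝ) :
    ENNReal.ofReal x ≤ ∑' n : ℕ, (Set.Ici (n : ℝ)).indicator (1 : ℝ → ENNReal) x := by
  rcases lt_or_ge x 0 with hx | hx
  · simp [ENNReal.ofReal_of_nonpos hx.le]
  · calc ENNReal.ofReal x
        ≤ ENNReal.ofReal ((⌊x⌋₊ + 1 : ℕ) : ℝ) :=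
          ENNReal.ofReal_le_ofReal (by push_cast; exact (Nat.lt_floor_add_one x).le)
      _ = ∑ n ∈ Finset.range (⌊x⌋₊ + 1), (Set.Ici (n : ℝ)).indicator (1 : ℝ → ENNReal) x := by
          rw [ENNReal.ofReal_natCast, Finset.sum_congr rfl (g := fun _ => 1)]
          · simp
          · intro n hn
            have hn' : (n : ℝ) ≤ x := (Nat.le_floor_iff hx).1 (by simpa [Nat.lt_succ_iff] using hn)
            simp [hn']
      _ ≤ _ := ENNReal.sum_le_tsum _

/-- The layer-cake bound `∫ x⁺ dν ≤ ∑ₙ ν [n, ∞)`. -/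
lemma lintegral_ofReal_le_tsum_measure_Ici (ν : Measure ℝ) :
    ∫⁻ x, ENNReal.ofReal x ∂ν ≤ ∑' n : ℕ, ν (Set.Ici (n : ℝ)) := by
  calc ∫⁻ x, ENNReal.ofReal x ∂ν
      ≤ ∫⁻ x, ∑' n : ℕ, (Set.Ici (n : ℝ)).indicator (1 : ℝ → ENNReal) x ∂ν :=
        lintegral_mono ofReal_le_tsum_indicator
    _ = ∑' n : ℕ, ν (Set.Ici (n : ℝ)) := by
        rw [lintegral_tsum fun n => (measurable_one.indicator measurableSet_Ici).aemeasurable]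
        simp

lemma tendsto_measure_Ioi_atTop_zero (ν : Measure ℝ) [IsFiniteMeasure ν] :
    Tendsto (fun x => ν (Set.Ioi x)) atTop (𝓝 0) := by
  have h := ENNReal.Tendsto.sub (tendsto_const_nhds (x := ν Set.univ))
    (tendsto_measure_Iic_atTop ν) (Or.inl (measure_ne_top ν _))
  rw [tsub_self] at h
  refine h.congr fun x => ?_
  rw [← Set.compl_Iic, measure_compl measurableSet_Iic (measure_ne_top ν _)]

/-- The second Borel–Cantelli lemma for independent random variables. -/
lemma ae_frequently_mem_of_iIndepFun {Ω : Type*} [MeasurableSpace Ω] {μ : Measure Ω}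
    {X : ℕ → Ω → ℝ} (hmeas : ∀ n, Measurable (X n)) (hindep : iIndepFun X μ)
    {S : ℕ → Set ℝ} (hS : ∀ n, MeasurableSet (S n)) (hsum : ∑' n, μ.map (X n) (S n) = ⊤) :
    ∀ᵐ ω ∂μ, ∃ᶠ n in atTop, X n ω ∈ S n := by
  have : IsProbabilityMeasure μ := hindep.isProbabilityMeasure
  have hpre : ∀ n, MeasurableSet (X n ⁻¹' S n) := fun n => hmeas n (hS n)
  have hone : μ (limsup (fun n => X n ⁻¹' S n) atTop) = 1 := by
    refine measure_limsup_eq_one hpre ?_ ?_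
    · exact (iIndepSet_iff_meas_biInter hpre).2 fun s =>
        hindep.meas_biInter fun i _ => ⟨S i, hS i, rfl⟩
    · rw [← hsum]
      exact tsum_congr fun n => (Measure.map_apply (hmeas n) (hS n)).symm
  filter_upwards [(mem_ae_iff_prob_eq_one (MeasurableSet.measurableSet_limsup hpre)).2 hone]
    with ω hω
  rwa [mem_limsup_iff_frequently_mem] at hω

/-- A sequence that both exceeds `n` and stays below `n / 2` infinitely often makes the first
coordinate oscillate. -/
lemma not_tendsto_scaled_max {x : ℕ → ℝ} (hbig : ∃ᶠ n : ℕ in atTop, (n : ℝ) ≤ x n)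
    (hsmall : ∃ᶠ n : ℕ in atTop, x n ≤ (n : ℝ) / 2) (l : EReal) :
    ¬ Tendsto (fun n : ℕ => ((((n + 1 : ℕ) : ℝ)⁻¹ * max (-x n) (-(n : ℝ)) : ℝ) : EReal))
      atTop (𝓝 l) := by
  intro h
  have hlow : ((-(1 / 2) : ℝ) : EReal) ≤ l := by
    refine ge_of_tendsto_of_frequently h (hsmall.mono fun n hn => ?_)
    rw [EReal.coe_le_coe_iff, inv_mul_eq_div, le_div_iff₀ (by positivity)]
    refine le_trans ?_ (le_max_left _ _)
    push_cast
    linarith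
  have hup : l ≤ ((-(2 / 3) : ℝ) : EReal) := by
    refine le_of_tendsto_of_frequently h
      ((hbig.and_eventually (eventually_ge_atTop 2)).mono fun n hn => ?_)
    have h2 : (2 : ℝ) ≤ n := by exact_mod_cast hn.2
    rw [EReal.coe_le_coe_iff, inv_mul_eq_div, div_le_iff₀ (by positivity),
      max_eq_right (neg_le_neg hn.1)]
    push_cast
    linarith
  have := EReal.coe_le_coe_iff.1 (hlow.trans hup)
  norm_num at this

/-- **Example (the integrability condition is necessary).**
Let `(X_n)` be i.i.d. real random variables with `X_n ≥ 1` a.s. and `𝔼[X_n] = +∞`, and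
`A(n) = [[-X_n, -X_n, 0], [-∞, 0, 0], [-∞, -∞, -1]]`. Then for `n ≥ 1`,
`x(n,0) = (max(-X_{n-1}, -(n-1)), 0, -n)ᵀ`, and `(1/n) x(n,0)` converges to `(0,0,-1)ᵀ` in
probability but does not converge almost surely. -/
theorem integrability_example
    {Ω : Type*} [MeasurableSpace Ω] (μ : Measure Ω) [IsProbabilityMeasure μ]
    (X : ℕ → Ω → ℝ)
    (hmeas : ∀ n, Measurable (X n))
    (hindep : iIndepFun X μ)
    (hident : ∀ n, μ.map (X n) = μ.map (X 0))
    (hge : ∀ n, ∀ᵐ ω ∂μ, 1 ≤ X n ω)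
    (hinf : ∫⁻ ω, ENNReal.ofReal (X 0 ω) ∂μ = ⊤) :
    (∀ᵐ ω ∂μ, ∀ n : ℕ, 1 ≤ n →
      xvec (fun m => exIntegMat (X m ω)) n 0 =
        ((max (-(X (n - 1) ω)) (-((n : ℝ) - 1)) : ℝ) : EReal) ∧
      xvec (fun m => exIntegMat (X m ω)) n 1 = 0 ∧
      xvec (fun m => exIntegMat (X m ω)) n 2 = ((-(n : ℝ) : ℝ) : EReal)) ∧
    -- convergence in probability to (0, 0, -1):
    (∀ i : Fin 3, ∀ U ∈ 𝓝 ((![0, 0, -1] : Fin 3 → EReal) i),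
      Tendsto (fun n => μ {ω | mpScale n (xvec (fun m => exIntegMat (X m ω)) n i) ∉ U})
        atTop (𝓝 0)) ∧
    -- but not almost sure convergence:
    ¬ (∀ᵐ ω ∂μ, ∀ i : Fin 3, ∃ l : EReal,
      Tendsto (fun n => mpScale n (xvec (fun m => exIntegMat (X m ω)) n i)) atTop (𝓝 l)) := by
  have hpos : ∀ᵐ ω ∂μ, ∀ n, 0 ≤ X n ω :=
    (ae_all_iff.2 hge).mono fun ω hω n => zero_le_one.trans (hω n)
  have hprob : IsProbabilityMeasure (μ.map (X 0)) :=
    Measure.isProbabilityMeasure_map (hmeas 0).aemeasurable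
  refine ⟨?_, ?_, ?_⟩
  · filter_upwards [hpos] with ω hω n hn
    obtain ⟨n, rfl⟩ := Nat.exists_eq_add_of_le' hn
    simpa using xvec_exIntegMat_succ hω n
  · intro i U hU
    rw [← tendsto_add_atTop_iff_nat 1]
    fin_cases i
    · obtain ⟨ε, hε, hball⟩ := Metric.mem_nhds_iff.1
        (continuous_coe_real_ereal.continuousAt.preimage_mem_nhds (x := (0 : ℝ)) hU)
      have hlim : Tendsto (fun n : ℕ => μ.map (X 0) (Set.Ioi (ε / 2 * (n + 1 : ℕ)))) atTop (𝓝 0) :=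
        (tendsto_measure_Ioi_atTop_zero _).comp (((tendsto_natCast_atTop_atTop (R := ℝ)).comp
          (tendsto_add_atTop_nat 1)).const_mul_atTop (half_pos hε))
      refine tendsto_of_tendsto_of_tendsto_of_le_of_le tendsto_const_nhds hlim
        (fun _ => zero_le) fun n => ?_
      dsimp only
      rw [← hident n, Measure.map_apply (hmeas n) measurableSet_Ioi]
      refine measure_mono_ae ?_
      filter_upwards [hpos] with ω hω hnot
      by_contra hle
      have hle' : X n ω ≤ ε / 2 * (n + 1 : ℕ) := not_lt.1 hle
      refine hnot ?_
      dsimp only [Fin.zero_eta]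
      rw [(xvec_exIntegMat_succ hω n).1, mpScale_coe]
      refine hball ?_
      have hn : (0 : ℝ) < (n + 1 : ℕ) := by positivity
      rw [mem_ball_zero_iff, Real.norm_eq_abs, inv_mul_eq_div, abs_div, abs_of_pos hn,
        div_lt_iff₀ hn, abs_of_nonpos (max_le (by linarith [hω n]) (by simp))]
      have := le_max_left (-X n ω) (-(n : ℝ))
      nlinarith [mul_pos hε hn]
    · refine tendsto_const_nhds.congr fun n => Eq.symm (ae_iff.1 ?_)
      filter_upwards [hpos] with ω hω
      dsimp only [Fin.mk_one]
      rw [(xvec_exIntegMat_succ hω n).2.1, mpScale, mul_zero]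
      exact mem_of_mem_nhds hU
    · refine tendsto_const_nhds.congr fun n => Eq.symm (ae_iff.1 ?_)
      filter_upwards [hpos] with ω hω
      dsimp only [Fin.reduceFinMk]
      have hn : (n : ℝ) + 1 ≠ 0 := by positivity
      rw [(xvec_exIntegMat_succ hω n).2.2, mpScale_coe, Nat.cast_add_one, mul_neg,
        inv_mul_cancel₀ hn]
      simpa using mem_of_mem_nhds hU
  · intro h
    have hbig : ∀ᵐ ω ∂μ, ∃ᶠ n : ℕ in atTop, X n ω ∈ Set.Ici (n : ℝ) := by
      refine ae_frequently_mem_of_iIndepFun hmeas hindep (fun _ => measurableSet_Ici) ?_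
      simp_rw [hident]
      refine top_le_iff.1 (le_trans ?_ (lintegral_ofReal_le_tsum_measure_Ici _))
      rw [lintegral_map ENNReal.measurable_ofReal (hmeas 0), hinf]
    have hsmall : ∀ᵐ ω ∂μ, ∃ᶠ n : ℕ in atTop, X n ω ∈ Set.Iic ((n : ℝ) / 2) := by
      refine ae_frequently_mem_of_iIndepFun hmeas hindep (fun _ => measurableSet_Iic) ?_
      simp_rw [hident]
      by_contra hne
      have hone : Tendsto (fun n : ℕ => μ.map (X 0) (Set.Iic ((n : ℝ) / 2))) atTop
          (𝓝 (μ.map (X 0) Set.univ)) :=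
        (tendsto_measure_Iic_atTop _).comp
          (tendsto_natCast_atTop_atTop.atTop_div_const two_pos)
      rw [measure_univ] at hone
      exact zero_ne_one (tendsto_nhds_unique (ENNReal.tendsto_atTop_zero_of_tsum_ne_top hne) hone)
    obtain ⟨ω, hω, hωpos, hωbig, hωsmall⟩ := (h.and (hpos.and (hbig.and hsmall))).exists
    obtain ⟨l, hl⟩ := hω 0
    refine not_tendsto_scaled_max hωbig hωsmall l
      (((tendsto_add_atTop_iff_nat 1).2 hl).congr fun n => ?_)
    rw [(xvec_exIntegMat_succ hωpos n).1, mpScale_coe]
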